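/- arXiv:1109.4136 — 5 statements merged into one kernel-verified Lean document; each statement's English description precedes it below -/
import Mathlib

section
/- Assume in addition that u¹ is upper semicontinuous and u² is lower semicontinuous, and that for every ε ∈ (0,1] the function ψ_ε (defined as ψ with this value of ε, all other parameters fixed) attains its global maximum at some point (τ₀^ε, x₀^ε, y₀^ε, i₀^ε) ∈ [0,t) × ℝⁿ × ℝⁿ × I. Then ε·((|x₀^ε|² + |y₀^ε|²)/2 + 1/(t − τ₀^ε)) → 0 as ε → 0 from the right; in particular ε^{1/2}|x₀^ε| → 0 and ε^{1/2}|y₀^ε| → 0. -/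
open Set Filter Topology

/-! If `z` maximizes `F - εP` then, for every competitor `w`, `ε P z ≤ F z - F w + ε P w`, hence
`ε P z ≤ (sup F - F w) + ε P w`. Choosing `w` so that `F w` is close to `sup F`, and only then
letting `ε → 0`, makes the right-hand side arbitrarily small. -/

theorem tendsto_mul_penalty_of_isMaxOn {κ Z : Type*} {l : Filter κ} {s : Set Z} {F P : Z → ℝ}
    {ε : κ → ℝ} {z : κ → Z} (hF : BddAbove (F '' s)) (hP : ∀ w ∈ s, 0 ≤ P w)
    (hε : Tendsto ε l (𝓝 0)) (hε₀ : ∀ᶠ k in l, 0 ≤ ε k) (hz : ∀ᶠ k in l, z k ∈ s)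
    (hmax : ∀ᶠ k in l, IsMaxOn (fun w => F w - ε k * P w) s (z k)) :
    Tendsto (fun k => ε k * P (z k)) l (𝓝 0) := by
  refine tendsto_order.2 ⟨fun c hc => ?_, fun η hη => ?_⟩
  · filter_upwards [hε₀, hz] with k hk hzk
    exact hc.trans_le (mul_nonneg hk (hP _ hzk))
  obtain rfl | hs := s.eq_empty_or_nonempty
  · exact hz.mono fun _ h => h.elim
  obtain ⟨_, ⟨w, hw, rfl⟩, hw_near_sup⟩ :=
    exists_lt_of_lt_csSup (hs.image F) (sub_lt_self (sSup (F '' s)) (half_pos hη))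
  have h_competitor : Tendsto (fun k => ε k * P w) l (𝓝 0) := by
    simpa only [zero_mul] using hε.mul_const (P w)
  filter_upwards [h_competitor.eventually_lt_const (half_pos hη), hz, hmax]
    with k h_small hzk hmax_k
  have h_le_sup : F (z k) ≤ sSup (F '' s) := le_csSup hF (mem_image_of_mem F hzk)
  have h_compare : F w - ε k * P w ≤ F (z k) - ε k * P (z k) := hmax_k hw
  linarith

theorem tendsto_sqrt_mul_of_tendsto_mul_sq {κ : Type*} {l : Filter κ} {a f : κ → ℝ}
    (h : Tendsto (fun k => a k * f k ^ 2) l (𝓝 0)) :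
    Tendsto (fun k => √(a k) * f k) l (𝓝 0) := by
  have h_abs (k : κ) : √(a k * f k ^ 2) = |√(a k) * f k| := by
    rw [Real.sqrt_mul' _ (sq_nonneg _), Real.sqrt_sq_eq_abs, abs_mul,
      abs_of_nonneg (Real.sqrt_nonneg _)]
  rw [tendsto_zero_iff_abs_tendsto_zero]
  simpa only [h_abs, Real.sqrt_zero, Function.comp_def] using h.sqrt

theorem tendsto_sqrt_mul_of_sq_le {κ : Type*} {l : Filter κ} {a f g : κ → ℝ} {C : ℝ}
    (ha : ∀ᶠ k in l, 0 ≤ a k) (hfg : ∀ᶠ k in l, f k ^ 2 ≤ C * g k)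
    (h : Tendsto (fun k => a k * g k) l (𝓝 0)) :
    Tendsto (fun k => √(a k) * f k) l (𝓝 0) := by
  have h_bound : Tendsto (fun k => C * (a k * g k)) l (𝓝 0) := by
    simpa only [mul_zero] using h.const_mul C
  refine tendsto_sqrt_mul_of_tendsto_mul_sq (squeeze_zero' ?_ ?_ h_bound)
  · exact ha.mono fun k hk => mul_nonneg hk (sq_nonneg _)
  · filter_upwards [ha, hfg] with k hk hfgk
    calc a k * f k ^ 2 ≤ a k * (C * g k) := by gcongr
      _ = C * (a k * g k) := mul_left_comm _ _ _

theorem abs_mul_div_le_abs {c τ t : ℝ} (h : |τ| ≤ |t|) : |c * τ / t| ≤ |c| := by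
  rw [mul_div_assoc, abs_mul, abs_div]
  exact mul_le_of_le_one_right (abs_nonneg c) (div_le_one_of_le₀ h (abs_nonneg t))

section Doubling

variable {E ι : Type*} [SeminormedAddCommGroup E]

/-- The part of `ψ_ε` that does not depend on `ε`, as a function of the quadruple
`(τ, x, y, i)`. -/
noncomputable def doubledDifference (u1 u2 : ℝ → E → ι → ℝ) (α γbar δ σ t : ℝ) :
    ℝ × E × E × ι → ℝ :=
  fun (τ, x, y, i) => u1 τ x i - u2 τ y i - δ * σ * τ / t -
    α / 2 * Real.exp (γbar * τ) * ‖x - y‖ ^ 2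

/-- The coefficient of `-ε` in `ψ_ε`, which confines maximizing sequences to bounded `x`, `y` and
to `τ` away from `t`. At `τ = t` the division gives `0`, so only `τ < t` is meaningful. -/
noncomputable def doublingPenalty (t : ℝ) : ℝ × E × E × ι → ℝ :=
  fun (τ, x, y, _) => (‖x‖ ^ 2 + ‖y‖ ^ 2) / 2 + 1 / (t - τ)

theorem bddAbove_doubledDifference_image {u1 u2 : ℝ → E → ι → ℝ} {α γbar δ σ t M : ℝ}
    (hα : 0 ≤ α) (hu : ∀ τ ∈ Ico 0 t, ∀ x y i, u1 τ x i - u2 τ y i ≤ M) :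
    BddAbove (doubledDifference u1 u2 α γbar δ σ t '' {z | z.1 ∈ Ico 0 t}) := by
  refine ⟨M + |δ * σ|, ?_⟩
  rintro _ ⟨⟨τ, x, y, i⟩, hτ, rfl⟩
  have h_drift : |δ * σ * τ / t| ≤ |δ * σ| :=
    abs_mul_div_le_abs (abs_le_abs_of_nonneg hτ.1 hτ.2.le)
  have h_quad : 0 ≤ α / 2 * Real.exp (γbar * τ) * ‖x - y‖ ^ 2 := by positivity
  dsimp only [doubledDifference]
  linarith [hu τ hτ x y i, neg_le_of_abs_le h_drift]

theorem half_norm_sq_add_le_doublingPenalty {t τ : ℝ} (hτ : τ < t) (x y : E) (i : ι) :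
    (‖x‖ ^ 2 + ‖y‖ ^ 2) / 2 ≤ doublingPenalty t (τ, x, y, i) :=
  le_add_of_nonneg_right (one_div_nonneg.2 (sub_pos.2 hτ).le)

theorem norm_sq_left_le_two_mul_doublingPenalty {t τ : ℝ} (hτ : τ < t) (x y : E) (i : ι) :
    ‖x‖ ^ 2 ≤ 2 * doublingPenalty t (τ, x, y, i) := by
  linarith [half_norm_sq_add_le_doublingPenalty hτ x y i, sq_nonneg ‖y‖]

theorem norm_sq_right_le_two_mul_doublingPenalty {t τ : ℝ} (hτ : τ < t) (x y : E) (i : ι) :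
    ‖y‖ ^ 2 ≤ 2 * doublingPenalty t (τ, x, y, i) := by
  linarith [half_norm_sq_add_le_doublingPenalty hτ x y i, sq_nonneg ‖x‖]

theorem doublingPenalty_nonneg {t : ℝ} {z : ℝ × E × E × ι} (hz : z.1 < t) :
    0 ≤ doublingPenalty t z :=
  le_trans (by positivity) (half_norm_sq_add_le_doublingPenalty hz z.2.1 z.2.2.1 z.2.2.2)

theorem stmt4_general {t α γbar δ σ M : ℝ} (hα : 0 ≤ α) {u1 u2 : ℝ → E → ι → ℝ}
    (hu : ∀ τ ∈ Ico 0 t, ∀ x y i, u1 τ x i - u2 τ y i ≤ M)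
    {ψ : ℝ → ℝ → E → E → ι → ℝ}
    (hψ : ∀ ε τ x y i, ψ ε τ x y i =
      u1 τ x i - u2 τ y i - δ * σ * τ / t -
        (α / 2 * Real.exp (γbar * τ) * ‖x - y‖ ^ 2
          + ε / 2 * (‖x‖ ^ 2 + ‖y‖ ^ 2) + ε / (t - τ)))
    {τ₀ : ℝ → ℝ} {x₀ y₀ : ℝ → E} {i₀ : ℝ → ι}
    (hτ₀ : ∀ ε ∈ Ioc (0 : ℝ) 1, τ₀ ε ∈ Ico 0 t)
    (hmax : ∀ ε ∈ Ioc (0 : ℝ) 1, ∀ τ x y i, τ ∈ Ico 0 t →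
      ψ ε τ x y i ≤ ψ ε (τ₀ ε) (x₀ ε) (y₀ ε) (i₀ ε)) :
    Tendsto (fun ε => ε * ((‖x₀ ε‖ ^ 2 + ‖y₀ ε‖ ^ 2) / 2 + 1 / (t - τ₀ ε)))
        (𝓝[Ioc (0 : ℝ) 1] 0) (𝓝 0) ∧
      Tendsto (fun ε => √ε * ‖x₀ ε‖) (𝓝[Ioc (0 : ℝ) 1] 0) (𝓝 0) ∧
      Tendsto (fun ε => √ε * ‖y₀ ε‖) (𝓝[Ioc (0 : ℝ) 1] 0) (𝓝 0) := by
  have h_mem : ∀ᶠ ε in 𝓝[Ioc (0 : ℝ) 1] 0, ε ∈ Ioc (0 : ℝ) 1 := self_mem_nhdsWithin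
  have h_nonneg : ∀ᶠ ε in 𝓝[Ioc (0 : ℝ) 1] 0, 0 ≤ ε := h_mem.mono fun ε hε => hε.1.le
  have h_split (ε τ x y i) : ψ ε τ x y i =
      doubledDifference u1 u2 α γbar δ σ t (τ, x, y, i) - ε * doublingPenalty t (τ, x, y, i) := by
    rw [hψ, doubledDifference, doublingPenalty]
    ring
  have h_isMaxOn (ε) (hε : ε ∈ Ioc (0 : ℝ) 1) :
      IsMaxOn (fun z => doubledDifference u1 u2 α γbar δ σ t z - ε * doublingPenalty t z)
        {z | z.1 ∈ Ico 0 t} (τ₀ ε, x₀ ε, y₀ ε, i₀ ε) := by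
    rintro ⟨τ, x, y, i⟩ hτ
    simpa only [h_split, mem_ofPred_eq] using hmax ε hε τ x y i hτ
  have h_penalty : Tendsto (fun ε => ε * doublingPenalty t (τ₀ ε, x₀ ε, y₀ ε, i₀ ε))
      (𝓝[Ioc (0 : ℝ) 1] 0) (𝓝 0) :=
    tendsto_mul_penalty_of_isMaxOn (bddAbove_doubledDifference_image hα hu)
      (fun _ hz => doublingPenalty_nonneg hz.2) (tendsto_id.mono_left nhdsWithin_le_nhds)
      h_nonneg (h_mem.mono hτ₀) (h_mem.mono h_isMaxOn)
  exact ⟨h_penalty,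
    tendsto_sqrt_mul_of_sq_le h_nonneg
      (h_mem.mono fun ε hε => norm_sq_left_le_two_mul_doublingPenalty (hτ₀ ε hε).2 ..) h_penalty,
    tendsto_sqrt_mul_of_sq_le h_nonneg
      (h_mem.mono fun ε hε => norm_sq_right_le_two_mul_doublingPenalty (hτ₀ ε hε).2 ..) h_penalty⟩

end Doubling

/-- Lemma 2-(i), refined estimate: along the maximum points of `ψ_ε`, the full
penalization `ε((|x₀^ε|² + |y₀^ε|²)/2 + 1/(t - τ₀^ε))` tends to `0` as `ε → 0⁺`;
in particular `ε^{1/2}|x₀^ε| → 0` and `ε^{1/2}|y₀^ε| → 0`. -/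
theorem stmt4
    (n m : ℕ) (hn : 1 ≤ n) (hm : 1 ≤ m)
    (T t : ℝ) (hT : 0 < T) (ht : t ∈ Set.Ioc 0 T)
    (u1 u2 : ℝ → EuclideanSpace ℝ (Fin n) → Fin m → ℝ)
    (hb1 : ∃ M, ∀ i τ x, τ ∈ Set.Icc 0 T → |u1 τ x i| ≤ M)
    (hb2 : ∃ M, ∀ i τ x, τ ∈ Set.Icc 0 T → |u2 τ x i| ≤ M)
    (husc : UpperSemicontinuousOn
      (fun p : ℝ × EuclideanSpace ℝ (Fin n) × Fin m => u1 p.1 p.2.1 p.2.2)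
      {p : ℝ × EuclideanSpace ℝ (Fin n) × Fin m | p.1 ∈ Set.Icc 0 T})
    (hlsc : LowerSemicontinuousOn
      (fun p : ℝ × EuclideanSpace ℝ (Fin n) × Fin m => u2 p.1 p.2.1 p.2.2)
      {p : ℝ × EuclideanSpace ℝ (Fin n) × Fin m | p.1 ∈ Set.Icc 0 T})
    (α γbar δ σ : ℝ) (hα : 0 < α) (hγbar : 0 ≤ γbar)
    (hδ : δ ∈ Set.Ioo (0:ℝ) 1) (hσ : 0 ≤ σ)
    (ψ : ℝ → ℝ → EuclideanSpace ℝ (Fin n) → EuclideanSpace ℝ (Fin n) → Fin m → ℝ)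
    (hψ : ∀ ε τ x y i, ψ ε τ x y i =
      u1 τ x i - u2 τ y i - δ * σ * τ / t -
        (α / 2 * Real.exp (γbar * τ) * ‖x - y‖ ^ 2
          + ε / 2 * (‖x‖ ^ 2 + ‖y‖ ^ 2) + ε / (t - τ)))
    (τ₀ : ℝ → ℝ) (x₀ y₀ : ℝ → EuclideanSpace ℝ (Fin n)) (i₀ : ℝ → Fin m)
    (hτ₀ : ∀ ε ∈ Set.Ioc (0:ℝ) 1, τ₀ ε ∈ Set.Ico 0 t)
    (hmax : ∀ ε ∈ Set.Ioc (0:ℝ) 1, ∀ τ x y i, τ ∈ Set.Ico 0 t →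
      ψ ε τ x y i ≤ ψ ε (τ₀ ε) (x₀ ε) (y₀ ε) (i₀ ε)) :
    Tendsto (fun ε => ε * ((‖x₀ ε‖ ^ 2 + ‖y₀ ε‖ ^ 2) / 2 + 1 / (t - τ₀ ε)))
        (𝓝[Set.Ioc (0:ℝ) 1] 0) (𝓝 0) ∧
      Tendsto (fun ε => Real.sqrt ε * ‖x₀ ε‖) (𝓝[Set.Ioc (0:ℝ) 1] 0) (𝓝 0) ∧
      Tendsto (fun ε => Real.sqrt ε * ‖y₀ ε‖) (𝓝[Set.Ioc (0:ℝ) 1] 0) (𝓝 0) := by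
  obtain ⟨M₁, hM₁⟩ := hb1
  obtain ⟨M₂, hM₂⟩ := hb2
  have hIcc {τ : ℝ} (hτ : τ ∈ Ico 0 t) : τ ∈ Icc 0 T := ⟨hτ.1, hτ.2.le.trans ht.2⟩
  exact stmt4_general hα.le (fun τ hτ x y i => (le_abs_self _).trans <| (abs_sub _ _).trans <|
    add_le_add (hM₁ i τ x (hIcc hτ)) (hM₂ i τ y (hIcc hτ))) hψ hτ₀ hmax
end

section
/- Assume in addition that there is a function ω : [0,∞) → [0,∞) such that |u^j_i(τ,x) − u^j_i(τ,y)| ≤ ω(|x−y|) for j = 1,2 and all i ∈ I, τ ∈ [0,T], x, y ∈ ℝⁿ. Then α·e^{γ̄τ₀}|x₀ − y₀|² ≤ 2·ω(|x₀ − y₀|). -/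
open Set Real

/-!
At a maximum point `(x₀, y₀)` of `f x - g y - φ x y`, compare with the two diagonal points
`(x₀, x₀)` and `(y₀, y₀)` and add the two inequalities. The quadratic coupling vanishes on the
diagonal, and a separable penalty `ρ x + ρ y` cancels, so what remains is the coupling at
`(x₀, y₀)` on one side and the increments of `f` and `g` between `x₀` and `y₀` on the other.
-/

theorem two_mul_sub_le_of_isMaxOn_diagonal {X : Type*} {f g : X → ℝ} {φ : X → X → ℝ} {x₀ y₀ : X}
    (hmax : IsMaxOn (fun p : X × X ↦ f p.1 - g p.2 - φ p.1 p.2) (diagonal X) (x₀, y₀)) :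
    2 * φ x₀ y₀ - (φ x₀ x₀ + φ y₀ y₀) ≤ (f x₀ - f y₀) + (g x₀ - g y₀) := by
  have hx : f x₀ - g x₀ - φ x₀ x₀ ≤ f x₀ - g y₀ - φ x₀ y₀ := hmax (mem_diagonal x₀)
  have hy : f y₀ - g y₀ - φ y₀ y₀ ≤ f x₀ - g y₀ - φ x₀ y₀ := hmax (mem_diagonal y₀)
  linarith

theorem mul_dist_sq_le_of_isMaxOn_diagonal {X : Type*} [PseudoMetricSpace X] {f g ρ : X → ℝ}
    {κ : ℝ} {x₀ y₀ : X}
    (hmax : IsMaxOn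
      (fun p : X × X ↦ f p.1 - g p.2 - (κ / 2 * dist p.1 p.2 ^ 2 + (ρ p.1 + ρ p.2)))
      (diagonal X) (x₀, y₀)) :
    κ * dist x₀ y₀ ^ 2 ≤ (f x₀ - f y₀) + (g x₀ - g y₀) := by
  have key := two_mul_sub_le_of_isMaxOn_diagonal
    (φ := fun x y ↦ κ / 2 * dist x y ^ 2 + (ρ x + ρ y)) hmax
  simp only [dist_self] at key
  linarith

theorem stmt5_general {E ι : Type*} [SeminormedAddCommGroup E] {u₁ u₂ : ℝ → E → ι → ℝ}
    {t α ε γ δ σ : ℝ} {ψ : ℝ → E → E → ι → ℝ}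
    (hψ : ∀ τ x y i, ψ τ x y i =
      u₁ τ x i - u₂ τ y i - δ * σ * τ / t -
        (α / 2 * exp (γ * τ) * ‖x - y‖ ^ 2 + ε / 2 * (‖x‖ ^ 2 + ‖y‖ ^ 2) + ε / (t - τ)))
    {τ₀ : ℝ} {x₀ y₀ : E} {i₀ : ι} (hτ₀ : τ₀ ∈ Ico 0 t)
    (hmax : ∀ τ x y i, τ ∈ Ico 0 t → ψ τ x y i ≤ ψ τ₀ x₀ y₀ i₀)
    {ω : ℝ → ℝ}
    (hu₁ : ∀ i τ x y, τ ∈ Ico 0 t → |u₁ τ x i - u₁ τ y i| ≤ ω ‖x - y‖)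
    (hu₂ : ∀ i τ x y, τ ∈ Ico 0 t → |u₂ τ x i - u₂ τ y i| ≤ ω ‖x - y‖) :
    α * exp (γ * τ₀) * ‖x₀ - y₀‖ ^ 2 ≤ 2 * ω ‖x₀ - y₀‖ := by
  let f (x : E) : ℝ := u₁ τ₀ x i₀ - δ * σ * τ₀ / t - ε / (t - τ₀)
  let g (y : E) : ℝ := u₂ τ₀ y i₀
  let ρ (x : E) : ℝ := ε / 2 * ‖x‖ ^ 2
  have hψ_slice (x y : E) : ψ τ₀ x y i₀ =
      f x - g y - (α * exp (γ * τ₀) / 2 * dist x y ^ 2 + (ρ x + ρ y)) := by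
    rw [hψ, dist_eq_norm]
    ring
  have hmax_diagonal : IsMaxOn
      (fun p : E × E ↦ f p.1 - g p.2 - (α * exp (γ * τ₀) / 2 * dist p.1 p.2 ^ 2 + (ρ p.1 + ρ p.2)))
      (diagonal E) (x₀, y₀) := by
    simpa only [isMaxOn_iff, ← hψ_slice] using fun (p : E × E) _ ↦ hmax τ₀ p.1 p.2 i₀ hτ₀
  calc α * exp (γ * τ₀) * ‖x₀ - y₀‖ ^ 2
      = α * exp (γ * τ₀) * dist x₀ y₀ ^ 2 := by rw [dist_eq_norm]
    _ ≤ (f x₀ - f y₀) + (g x₀ - g y₀) := mul_dist_sq_le_of_isMaxOn_diagonal hmax_diagonal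
    _ = (u₁ τ₀ x₀ i₀ - u₁ τ₀ y₀ i₀) + (u₂ τ₀ x₀ i₀ - u₂ τ₀ y₀ i₀) := by simp only [f, g]; ring
    _ ≤ ω ‖x₀ - y₀‖ + ω ‖x₀ - y₀‖ :=
        add_le_add (le_of_abs_le (hu₁ i₀ τ₀ x₀ y₀ hτ₀)) (le_of_abs_le (hu₂ i₀ τ₀ x₀ y₀ hτ₀))
    _ = 2 * ω ‖x₀ - y₀‖ := (two_mul _).symm

/-- Lemma 2-(i), part (ii): if `u¹` and `u²` have a common modulus of continuity `ω`
in space, then `α e^{γ̄τ₀}|x₀ - y₀|² ≤ 2 ω(|x₀ - y₀|)`. -/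
theorem stmt5
    (n m : ℕ) (hn : 1 ≤ n) (hm : 1 ≤ m)
    (T t : ℝ) (hT : 0 < T) (ht : t ∈ Set.Ioc 0 T)
    (u1 u2 : ℝ → EuclideanSpace ℝ (Fin n) → Fin m → ℝ)
    (hbdd1 : BddAbove {v : ℝ | ∃ i τ x, τ ∈ Set.Icc 0 T ∧ v = |u1 τ x i|})
    (hbdd2 : BddAbove {v : ℝ | ∃ i τ x, τ ∈ Set.Icc 0 T ∧ v = |u2 τ x i|})
    (R : ℝ)
    (hR : R = max (sSup {v : ℝ | ∃ i τ x, τ ∈ Set.Icc 0 T ∧ v = |u1 τ x i|})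
                  (sSup {v : ℝ | ∃ i τ x, τ ∈ Set.Icc 0 T ∧ v = |u2 τ x i|}))
    (α ε γbar δ σ : ℝ) (hα : 0 < α) (hε : 0 < ε) (hγbar : 0 ≤ γbar)
    (hδ : δ ∈ Set.Ioo (0:ℝ) 1) (hσ : 0 ≤ σ)
    (ψ : ℝ → EuclideanSpace ℝ (Fin n) → EuclideanSpace ℝ (Fin n) → Fin m → ℝ)
    (hψ : ∀ τ x y i, ψ τ x y i =
      u1 τ x i - u2 τ y i - δ * σ * τ / t -
        (α / 2 * Real.exp (γbar * τ) * ‖x - y‖ ^ 2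
          + ε / 2 * (‖x‖ ^ 2 + ‖y‖ ^ 2) + ε / (t - τ)))
    (τ₀ : ℝ) (x₀ y₀ : EuclideanSpace ℝ (Fin n)) (i₀ : Fin m)
    (hτ₀ : τ₀ ∈ Set.Ico 0 t)
    (hmax : ∀ τ x y i, τ ∈ Set.Ico 0 t → ψ τ x y i ≤ ψ τ₀ x₀ y₀ i₀)
    (ω : ℝ → ℝ) (hω : ∀ r, 0 ≤ r → 0 ≤ ω r)
    (hmod1 : ∀ i τ x y, τ ∈ Set.Icc 0 T → |u1 τ x i - u1 τ y i| ≤ ω ‖x - y‖)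
    (hmod2 : ∀ i τ x y, τ ∈ Set.Icc 0 T → |u2 τ x i - u2 τ y i| ≤ ω ‖x - y‖) :
    α * Real.exp (γbar * τ₀) * ‖x₀ - y₀‖ ^ 2 ≤ 2 * ω ‖x₀ - y₀‖ :=
  have hsub : Ico 0 t ⊆ Icc 0 T := Ico_subset_Icc_self.trans (Icc_subset_Icc_right ht.2)
  stmt5_general hψ hτ₀ hmax (fun i τ x y hτ ↦ hmod1 i τ x y (hsub hτ))
    fun i τ x y hτ ↦ hmod2 i τ x y (hsub hτ)
end

section
/- Assume in addition that ψ(τ₀,x₀,y₀,i₀) ≥ 0 and that for some constant L ≥ 0 the function x ↦ u¹_{i₀}(τ₀,x) is L-Lipschitz on ℝⁿ. Then α·e^{γ̄τ₀}|x₀ − y₀| ≤ n·(L + 2·(Rε)^{1/2}). -/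
open Set Real

/-!
Freeze `τ₀`, `y₀`, `i₀` and move `x₀` along the segment towards `y₀`. To first order in the length
of the displacement, `α/2 * e^{γ̄τ₀} * ‖x - y₀‖²` drops at the rate `α * e^{γ̄τ₀} * ‖x₀ - y₀‖`,
while `u¹` loses at most at the rate `L` and `ε/2 * ‖x‖²` grows at most at the rate `ε * ‖x₀‖`.
Maximality therefore gives `α * e^{γ̄τ₀} * ‖x₀ - y₀‖ ≤ L + ε * ‖x₀‖`. Nonnegativity of the maximum
bounds `ε/2 * ‖x₀‖²` by `2R`, that is, `ε * ‖x₀‖` by `2√(Rε)`.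
-/

open Filter Topology

lemma mul_le_two_mul_sqrt_of_half_mul_sq_le {ε r R : ℝ} (hε : 0 ≤ ε) (h : ε / 2 * r ^ 2 ≤ 2 * R) :
    ε * r ≤ 2 * √(R * ε) := by
  have hsq : (ε * r / 2) ^ 2 ≤ R * ε :=
    calc (ε * r / 2) ^ 2 = ε / 2 * (ε / 2 * r ^ 2) := by ring
      _ ≤ ε / 2 * (2 * R) := by gcongr
      _ = R * ε := by ring
  linarith [Real.le_sqrt_of_sq_le hsq]

lemma sq_norm_sub_sq_norm_le {E : Type*} [SeminormedAddCommGroup E] (x x₀ : E) :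
    ‖x‖ ^ 2 - ‖x₀‖ ^ 2 ≤ 2 * ‖x₀‖ * ‖x - x₀‖ + ‖x - x₀‖ ^ 2 := by
  have hsq : ‖x‖ ^ 2 ≤ (‖x₀‖ + ‖x - x₀‖) ^ 2 := by
    gcongr
    exact norm_le_norm_add_norm_sub' x x₀
  linarith

lemma sub_le_mul_norm_sub_of_lipschitzWith {E : Type*} [SeminormedAddCommGroup E] {f : E → ℝ}
    {L : ℝ} (hL : 0 ≤ L) (hf : LipschitzWith L.toNNReal f) (x y : E) :
    f x - f y ≤ L * ‖y - x‖ := by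
  simpa only [sub_le_iff_le_add', Real.coe_toNNReal L hL, dist_eq_norm'] using hf.le_add_mul x y

section LocalMax

variable {E : Type*} [SeminormedAddCommGroup E] [NormedSpace ℝ E]

lemma mul_norm_sub_le_of_isLocalMax_sub_sq {g : E → ℝ} {a C K : ℝ} {x₀ y : E} (hK : 0 ≤ K)
    (hg : ∀ᶠ x in 𝓝 x₀, g x₀ - g x ≤ K * ‖x - x₀‖ + C * ‖x - x₀‖ ^ 2)
    (hmax : IsLocalMax (fun x ↦ g x - a / 2 * ‖x - y‖ ^ 2) x₀) :
    a * ‖x₀ - y‖ ≤ K := by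
  simp only [← dist_eq_norm] at hg hmax ⊢
  set d := dist x₀ y with hd
  have hd_nonneg : 0 ≤ d := dist_nonneg
  rcases hd_nonneg.eq_or_lt with hd_zero | hd_pos
  · rwa [← hd_zero, mul_zero]
  have hline : Tendsto (AffineMap.lineMap x₀ y) (𝓝[>] (0 : ℝ)) (𝓝 x₀) :=
    (AffineMap.lineMap_continuous.tendsto' 0 x₀ (AffineMap.lineMap_apply_zero x₀ y)).mono_left
      nhdsWithin_le_nhds
  have hslope : ∀ᶠ s in 𝓝[>] (0 : ℝ), a * d * (1 - s / 2) ≤ K + C * (s * d) := by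
    filter_upwards [hline.eventually hg, hline.eventually hmax, self_mem_nhdsWithin]
      with s hgs hmaxs (hs : 0 < s)
    simp only [dist_lineMap_left, dist_lineMap_right, Real.norm_eq_abs, abs_of_pos hs, mul_pow,
      sq_abs, ← hd] at hgs hmaxs
    refine le_of_mul_le_mul_left ?_ (mul_pos hs hd_pos)
    linarith
  have hlhs : Tendsto (fun s : ℝ ↦ a * d * (1 - s / 2)) (𝓝[>] 0) (𝓝 (a * d)) :=
    (Continuous.tendsto' (by fun_prop) 0 _ (by simp)).mono_left nhdsWithin_le_nhds
  have hrhs : Tendsto (fun s : ℝ ↦ K + C * (s * d)) (𝓝[>] 0) (𝓝 K) :=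
    (Continuous.tendsto' (by fun_prop) 0 _ (by simp)).mono_left nhdsWithin_le_nhds
  exact le_of_tendsto_of_tendsto hlhs hrhs hslope

lemma mul_norm_sub_le_add_mul_norm_of_isLocalMax {f : E → ℝ} {a ε L : ℝ} {x₀ y : E}
    (hε : 0 ≤ ε) (hL : 0 ≤ L) (hf : ∀ᶠ x in 𝓝 x₀, f x₀ - f x ≤ L * ‖x - x₀‖)
    (hmax : IsLocalMax (fun x ↦ f x - ε / 2 * ‖x‖ ^ 2 - a / 2 * ‖x - y‖ ^ 2) x₀) :
    a * ‖x₀ - y‖ ≤ L + ε * ‖x₀‖ := by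
  refine mul_norm_sub_le_of_isLocalMax_sub_sq (C := ε / 2) (by positivity) ?_ hmax
  filter_upwards [hf] with x hfx
  have hsq : ε / 2 * (‖x‖ ^ 2 - ‖x₀‖ ^ 2) ≤ ε / 2 * (2 * ‖x₀‖ * ‖x - x₀‖ + ‖x - x₀‖ ^ 2) := by
    gcongr
    exact sq_norm_sub_sq_norm_le x x₀
  linarith

theorem stmt6_general {ι : Type*} {t : ℝ} {u1 u2 : ℝ → E → ι → ℝ} {R α ε γbar δ σ : ℝ}
    (hα : 0 ≤ α) (hε : 0 ≤ ε) (hδ : 0 ≤ δ) (hσ : 0 ≤ σ) {ψ : ℝ → E → E → ι → ℝ}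
    (hψ : ∀ τ x y i, ψ τ x y i =
      u1 τ x i - u2 τ y i - δ * σ * τ / t -
        (α / 2 * Real.exp (γbar * τ) * ‖x - y‖ ^ 2
          + ε / 2 * (‖x‖ ^ 2 + ‖y‖ ^ 2) + ε / (t - τ)))
    {τ₀ : ℝ} {x₀ y₀ : E} {i₀ : ι} (hτ₀ : τ₀ ∈ Ico 0 t)
    (hu1 : |u1 τ₀ x₀ i₀| ≤ R) (hu2 : |u2 τ₀ y₀ i₀| ≤ R)
    (hmax : IsLocalMax (fun x ↦ ψ τ₀ x y₀ i₀) x₀) (hpos : 0 ≤ ψ τ₀ x₀ y₀ i₀)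
    {L : ℝ} (hL : 0 ≤ L) (hLip : ∀ᶠ x in 𝓝 x₀, u1 τ₀ x₀ i₀ - u1 τ₀ x i₀ ≤ L * ‖x - x₀‖) :
    α * Real.exp (γbar * τ₀) * ‖x₀ - y₀‖ ≤ L + 2 * √(R * ε) := by
  have hslope : α * Real.exp (γbar * τ₀) * ‖x₀ - y₀‖ ≤ L + ε * ‖x₀‖ := by
    refine mul_norm_sub_le_add_mul_norm_of_isLocalMax (f := fun x ↦ u1 τ₀ x i₀) hε hL hLip
      (hmax.mono fun x hx ↦ ?_)
    simp only [hψ] at hx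
    linarith
  have hnorm : ε / 2 * ‖x₀‖ ^ 2 ≤ 2 * R := by
    have hdrift : 0 ≤ δ * σ * τ₀ / t :=
      div_nonneg (mul_nonneg (mul_nonneg hδ hσ) hτ₀.1) (hτ₀.1.trans hτ₀.2.le)
    have hbarrier : 0 ≤ ε / (t - τ₀) := div_nonneg hε (sub_nonneg.2 hτ₀.2.le)
    have hdoubling : 0 ≤ α / 2 * Real.exp (γbar * τ₀) * ‖x₀ - y₀‖ ^ 2 := by positivity
    have hy : 0 ≤ ε / 2 * ‖y₀‖ ^ 2 := by positivity
    rw [hψ] at hpos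
    linarith [(abs_le.1 hu1).2, (abs_le.1 hu2).1]
  linarith [mul_le_two_mul_sqrt_of_half_mul_sq_le hε hnorm]

end LocalMax

/-- Lemma 2-(i), part (iii): if moreover the max value is nonnegative and
`x ↦ u¹_{i₀}(τ₀,x)` is `L`-Lipschitz, then `α e^{γ̄τ₀}|x₀ - y₀| ≤ n(L + 2√(Rε))`. -/
theorem stmt6
    (n m : ℕ) (hn : 1 ≤ n) (hm : 1 ≤ m)
    (T t : ℝ) (hT : 0 < T) (ht : t ∈ Set.Ioc 0 T)
    (u1 u2 : ℝ → EuclideanSpace ℝ (Fin n) → Fin m → ℝ)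
    (hbdd1 : BddAbove {v : ℝ | ∃ i τ x, τ ∈ Set.Icc 0 T ∧ v = |u1 τ x i|})
    (hbdd2 : BddAbove {v : ℝ | ∃ i τ x, τ ∈ Set.Icc 0 T ∧ v = |u2 τ x i|})
    (R : ℝ)
    (hR : R = max (sSup {v : ℝ | ∃ i τ x, τ ∈ Set.Icc 0 T ∧ v = |u1 τ x i|})
                  (sSup {v : ℝ | ∃ i τ x, τ ∈ Set.Icc 0 T ∧ v = |u2 τ x i|}))
    (α ε γbar δ σ : ℝ) (hα : 0 < α) (hε : 0 < ε) (hγbar : 0 ≤ γbar)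
    (hδ : δ ∈ Set.Ioo (0:ℝ) 1) (hσ : 0 ≤ σ)
    (ψ : ℝ → EuclideanSpace ℝ (Fin n) → EuclideanSpace ℝ (Fin n) → Fin m → ℝ)
    (hψ : ∀ τ x y i, ψ τ x y i =
      u1 τ x i - u2 τ y i - δ * σ * τ / t -
        (α / 2 * Real.exp (γbar * τ) * ‖x - y‖ ^ 2
          + ε / 2 * (‖x‖ ^ 2 + ‖y‖ ^ 2) + ε / (t - τ)))
    (τ₀ : ℝ) (x₀ y₀ : EuclideanSpace ℝ (Fin n)) (i₀ : Fin m)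
    (hτ₀ : τ₀ ∈ Set.Ico 0 t)
    (hmax : ∀ τ x y i, τ ∈ Set.Ico 0 t → ψ τ x y i ≤ ψ τ₀ x₀ y₀ i₀)
    (hpos : 0 ≤ ψ τ₀ x₀ y₀ i₀)
    (L : ℝ) (hL : 0 ≤ L)
    (hLip : LipschitzWith (Real.toNNReal L) (fun x => u1 τ₀ x i₀)) :
    α * Real.exp (γbar * τ₀) * ‖x₀ - y₀‖ ≤ n * (L + 2 * Real.sqrt (R * ε)) := by
  have hτT : τ₀ ∈ Icc 0 T := ⟨hτ₀.1, hτ₀.2.le.trans ht.2⟩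
  exact (stmt6_general hα.le hε.le hδ.1.le hσ hψ hτ₀
    (hR ▸ le_max_of_le_left (le_csSup hbdd1 ⟨i₀, τ₀, x₀, hτT, rfl⟩))
    (hR ▸ le_max_of_le_right (le_csSup hbdd2 ⟨i₀, τ₀, y₀, hτT, rfl⟩))
    (.of_forall fun x ↦ hmax τ₀ x y₀ i₀ hτ₀) hpos hL
    (.of_forall fun x ↦ sub_le_mul_norm_sub_of_lipschitzWith hL hLip x₀ x)).trans
    (le_mul_of_one_le_left (by positivity) (by exact_mod_cast hn))
end

section
/- Let ᾱ, ε ≥ 0 and let X, Y ∈ Sⁿ satisfy the block inequality D(X,Y) ≤ 3ᾱ·J + 2ε·I_{2n}. Then for all real n×n matrices A and B one has tr(AAᵀX) − tr(BBᵀY) ≤ 3ᾱ·‖A − B‖_F² + 2ε·(‖A‖_F² + ‖B‖_F²). -/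
open Matrix

/-!
Stack `A` on top of `B` into `C`. Congruence by `C` preserves positive semidefiniteness and the
trace is cyclic, so `M ≤ N` gives `tr (C Cᴴ M) ≤ tr (C Cᴴ N)`. The block inequality becomes the
claim because pairing `C Cᴴ` with `J = [[1, -1], [-1, 1]]` yields `tr ((A - B) (A - B)ᴴ)`.
-/

section

variable {m n R : Type*}

theorem trace_fromBlocks [Fintype m] [Fintype n] [AddCommMonoid R] (P : Matrix m m R)
    (Q : Matrix m n R) (S : Matrix n m R) (T : Matrix n n R) :
    trace (fromBlocks P Q S T) = trace P + trace T := by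
  simp only [trace, diag_apply, Fintype.sum_sum_type, fromBlocks_apply₁₁, fromBlocks_apply₂₂]

variable [Fintype m]

theorem fromRows_mul_conjTranspose_self [Semiring R] [Star R] (A B : Matrix n m R) :
    fromRows A B * (fromRows A B)ᴴ = fromBlocks (A * Aᴴ) (A * Bᴴ) (B * Aᴴ) (B * Bᴴ) := by
  rw [conjTranspose_fromRows_eq_fromCols_conjTranspose, fromRows_mul_fromCols]

variable [Fintype n]

theorem trace_fromRows_mul_conjTranspose_self [Semiring R] [Star R] (A B : Matrix n m R) :
    trace (fromRows A B * (fromRows A B)ᴴ) = trace (A * Aᴴ) + trace (B * Bᴴ) := by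
  rw [fromRows_mul_conjTranspose_self, trace_fromBlocks]

theorem trace_fromRows_mul_conjTranspose_self_mul_fromBlocks_diagonal [Semiring R] [Star R]
    (A B : Matrix n m R) (X Y : Matrix n n R) :
    trace (fromRows A B * (fromRows A B)ᴴ * fromBlocks X 0 0 Y) =
      trace (A * Aᴴ * X) + trace (B * Bᴴ * Y) := by
  rw [fromRows_mul_conjTranspose_self, fromBlocks_multiply, trace_fromBlocks]
  simp only [Matrix.mul_zero, add_zero, zero_add]

theorem trace_fromRows_mul_conjTranspose_self_mul_fromBlocks_one_neg_one [DecidableEq n]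
    [Ring R] [StarRing R] (A B : Matrix n m R) :
    trace (fromRows A B * (fromRows A B)ᴴ * fromBlocks 1 (-1) (-1) 1) =
      trace ((A - B) * (A - B)ᴴ) := by
  rw [fromRows_mul_conjTranspose_self, fromBlocks_multiply, trace_fromBlocks]
  simp only [Matrix.mul_neg, Matrix.mul_one, conjTranspose_sub, Matrix.mul_sub, Matrix.sub_mul,
    trace_add, trace_sub, trace_neg]
  abel

theorem trace_mul_conjTranspose_self_mul_le_of_posSemidef_sub [CommRing R] [PartialOrder R]
    [StarRing R] [AddLeftMono R] {M N : Matrix n n R} (hMN : (N - M).PosSemidef)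
    (C : Matrix n m R) : trace (C * Cᴴ * M) ≤ trace (C * Cᴴ * N) := by
  have trace_congruence_nonneg : 0 ≤ trace (Cᴴ * (N - M) * C) :=
    (hMN.conjTranspose_mul_mul_same C).trace_nonneg
  rwa [trace_mul_cycle, Matrix.mul_sub, trace_sub, sub_nonneg] at trace_congruence_nonneg

end

theorem stmt8_general {m n R : Type*} [Fintype m] [Fintype n] [DecidableEq n] [CommRing R]
    [PartialOrder R] [StarRing R] [AddLeftMono R] {a b : R} {X Y : Matrix n n R}
    (hXY : (a • (fromBlocks (1 : Matrix n n R) (-1) (-1) 1) + b • (1 : Matrix (n ⊕ n) (n ⊕ n) R)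
      - fromBlocks X 0 0 (-Y)).PosSemidef)
    (A B : Matrix n m R) :
    trace (A * Aᴴ * X) - trace (B * Bᴴ * Y) ≤
      a * trace ((A - B) * (A - B)ᴴ) + b * (trace (A * Aᴴ) + trace (B * Bᴴ)) := by
  set C := fromRows A B with hC
  calc trace (A * Aᴴ * X) - trace (B * Bᴴ * Y)
      = trace (C * Cᴴ * fromBlocks X 0 0 (-Y)) := by
        rw [hC, trace_fromRows_mul_conjTranspose_self_mul_fromBlocks_diagonal, Matrix.mul_neg,
          trace_neg, sub_eq_add_neg]
    _ ≤ trace (C * Cᴴ * (a • fromBlocks 1 (-1) (-1) 1 + b • 1)) :=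
        trace_mul_conjTranspose_self_mul_le_of_posSemidef_sub hXY C
    _ = a * trace (C * Cᴴ * fromBlocks 1 (-1) (-1) 1) + b * trace (C * Cᴴ) := by
        simp only [Matrix.mul_add, Matrix.mul_smul, Matrix.mul_one, trace_add, trace_smul,
          smul_eq_mul]
    _ = a * trace ((A - B) * (A - B)ᴴ) + b * (trace (A * Aᴴ) + trace (B * Bᴴ)) := by
        rw [trace_fromRows_mul_conjTranspose_self_mul_fromBlocks_one_neg_one,
          trace_fromRows_mul_conjTranspose_self]

/-- Ishii's trace inequality: if the block matrix `D(X,Y) = [[X,0],[0,-Y]]` is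
dominated by `3ᾱ J + 2ε I` with `J = [[I,-I],[-I,I]]`, then for all matrices
`A`, `B` one has
`tr(AAᵀX) - tr(BBᵀY) ≤ 3ᾱ ‖A-B‖_F² + 2ε(‖A‖_F² + ‖B‖_F²)`. -/
theorem stmt8
    (n : ℕ) (hn : 1 ≤ n)
    (αbar ε : ℝ) (hαbar : 0 ≤ αbar) (hε : 0 ≤ ε)
    (X Y : Matrix (Fin n) (Fin n) ℝ) (hX : X.IsSymm) (hY : Y.IsSymm)
    (hXY : ((3 * αbar) • (fromBlocks (1 : Matrix (Fin n) (Fin n) ℝ) (-1) (-1) 1)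
        + (2 * ε) • (1 : Matrix (Fin n ⊕ Fin n) (Fin n ⊕ Fin n) ℝ)
        - fromBlocks X 0 0 (-Y)).PosSemidef)
    (A B : Matrix (Fin n) (Fin n) ℝ) :
    trace (A * Aᵀ * X) - trace (B * Bᵀ * Y)
      ≤ 3 * αbar * trace ((A - B) * (A - B)ᵀ)
        + 2 * ε * (trace (A * Aᵀ) + trace (B * Bᵀ)) := by
  simpa only [conjTranspose_eq_transpose_of_trivial] using stmt8_general hXY A B
end

section
/- Let ᾱ, ε ≥ 0 and let X, Y ∈ Sⁿ satisfy D(X,Y) ≤ 3ᾱ·J + 2ε·I_{2n}. Then X ≤ Y + 4ε·I_n. -/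
open Matrix

/-! Testing the hypothesis on the diagonal vectors `(v, v)` suffices: they lie in the kernel of `J`,
and there the quadratic form of `D(X, Y)` is that of `X - Y`, while that of `2ε I` is doubled. -/

section

variable {m n R : Type*} [Ring R] [PartialOrder R] [StarRing R]

lemma posSemidef_submatrix_add_submatrix {M : Matrix n n R} (hM : M.PosSemidef) (e f : m → n) :
    (M.submatrix e e + M.submatrix e f + M.submatrix f e + M.submatrix f f).PosSemidef := by
  classical
  constructor
  · simp only [IsHermitian, conjTranspose_add, conjTranspose_submatrix, hM.isHermitian.eq]
    abel
  · intro x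
    convert hM.2 (x.mapDomain e + x.mapDomain f) using 1
    simp [Finsupp.sum_mapDomain_index, Finsupp.sum_add_index', add_mul, mul_add, add_assoc,
      add_left_comm]

lemma posSemidef_add_of_posSemidef_fromBlocks {A B C D : Matrix m m R}
    (h : (fromBlocks A B C D).PosSemidef) : (A + B + C + D).PosSemidef :=
  posSemidef_submatrix_add_submatrix h Sum.inl Sum.inr

theorem stmt11_general [DecidableEq m] (α ε : R) (X Y : Matrix m m R)
    (hXY : ((3 * α) • fromBlocks (1 : Matrix m m R) (-1) (-1) 1
        + (2 * ε) • (1 : Matrix (m ⊕ m) (m ⊕ m) R)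
        - fromBlocks X 0 0 (-Y)).PosSemidef) :
    (Y + (4 * ε) • (1 : Matrix m m R) - X).PosSemidef := by
  have hblocks : (3 * α) • fromBlocks (1 : Matrix m m R) (-1) (-1) 1
        + (2 * ε) • (1 : Matrix (m ⊕ m) (m ⊕ m) R) - fromBlocks X 0 0 (-Y) =
      fromBlocks ((3 * α) • 1 + (2 * ε) • 1 - X) (-((3 * α) • 1))
        (-((3 * α) • 1)) ((3 * α) • 1 + (2 * ε) • 1 + Y) := by
    simp [← fromBlocks_one, fromBlocks_smul, fromBlocks_add, sub_eq_add_neg, fromBlocks_neg]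
  have hε : 4 * ε = 2 * ε + 2 * ε := by noncomm_ring
  rw [hblocks] at hXY
  convert posSemidef_add_of_posSemidef_fromBlocks hXY using 1
  rw [hε, add_smul]
  abel

end

/-- If `D(X,Y) = [[X,0],[0,-Y]] ≤ 3ᾱ J + 2ε I` with `J = [[I,-I],[-I,I]]`,
then `X ≤ Y + 4ε I`. -/
theorem stmt11
    (n : ℕ) (hn : 1 ≤ n)
    (αbar ε : ℝ) (hαbar : 0 ≤ αbar) (hε : 0 ≤ ε)
    (X Y : Matrix (Fin n) (Fin n) ℝ) (hX : X.IsSymm) (hY : Y.IsSymm)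
    (hXY : ((3 * αbar) • (fromBlocks (1 : Matrix (Fin n) (Fin n) ℝ) (-1) (-1) 1)
        + (2 * ε) • (1 : Matrix (Fin n ⊕ Fin n) (Fin n ⊕ Fin n) ℝ)
        - fromBlocks X 0 0 (-Y)).PosSemidef) :
    (Y + (4 * ε) • (1 : Matrix (Fin n) (Fin n) ℝ) - X).PosSemidef :=
  stmt11_general αbar ε X Y hXY
end
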